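/- Let A, B be nonzero real numbers and α, β ∈ ℝ, and let p, q be coprime integers with A·q = B·p (i.e., A/B = p/q). If p and q are both odd, then as T → ∞, (1/T)·∫₀ᵀ Φ(A·t − α, B·t − β) dt converges to (−1)^{(p+q)/2 + 1} · (8/(π² p q)) · Σ_{ℓ=0}^{∞} cos(2π(2ℓ+1)(pβ − qα)) / (2ℓ+1)², where Φ(u,v) = sgn(cos(2πu)·cos(2πv)). -/

import Mathlib

open Filter Real MeasureTheory

noncomputable def sgn (t : ℝ) : ℝ := if 0 < t then 1 else if t < 0 then -1 else 0

noncomputable def Φ (u v : ℝ) : ℝ := sgn (Real.cos (2 * π * u) * Real.cos (2 * π * v))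

/-! With `W u = sgn (cos (2πu))` one has `Φ u v = W u * W v`. Put `s = (A / p) t`; then
`A t = p s` and `B t = q s`, so the integrand is a function of `s` on the circle `ℝ / ℤ`, and its
time average is its mean `∫ W (p s - α) W (q s - β) ds`. The first factor has its Fourier
coefficients supported on multiples of `p` and the second on multiples of `q`, so by coprimality
only the frequencies `p q l` contribute to Parseval's formula. The square wave `W` has coefficient
`2 sin (π n / 2) / (π n)` at odd `n` and `0` at even `n`; pairing `l` with `-l` leaves the cosine
series over odd `l`, with sign `sin (π q l / 2) sin (π p l / 2) = (-1) ^ ((p + q) / 2 + 1)`. -/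

open AddCircle
open scoped ComplexConjugate Topology

section TimeAverage

variable {E : Type*} [NormedAddCommGroup E]

lemma intervalIntegrable_coe_addCircle {T : ℝ} [hT : Fact (0 < T)] {F : AddCircle T → E}
    (hF : Integrable F haarAddCircle) (a b : ℝ) :
    IntervalIntegrable (fun s : ℝ => F s) volume a b := by
  have hper : Function.Periodic (fun s : ℝ => F s) T := fun s => by simp
  have hvol : Integrable F volume := hF.smul_measure ENNReal.ofReal_ne_top
  have hmk := AddCircle.measurePreserving_mk T 0
  rw [zero_add] at hmk
  exact hper.intervalIntegrable₀ hT.out.ne'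
    ((intervalIntegrable_iff_integrableOn_Ioc_of_le hT.out.le).2
      (hmk.integrable_comp_of_integrable hvol)) a b

variable [NormedSpace ℝ E]

lemma isBounded_range_primitive_sub_mean {F : ℝ → E} {T : ℝ} (hF : F.Periodic T) (hT : T ≠ 0)
    (hF_int : IntervalIntegrable F volume 0 T) :
    Bornology.IsBounded
      (Set.range fun t => (∫ s in (0 : ℝ)..t, F s) - t • T⁻¹ • ∫ s in (0 : ℝ)..T, F s) := by
  have hF_int' := hF.intervalIntegrable₀ hT hF_int
  refine Function.Periodic.isBounded_of_continuous (c := T) (fun t => ?_) hT ?_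
  · rw [hF.intervalIntegral_add_eq_add 0 t hF_int', zero_add, add_smul, smul_inv_smul₀ hT]
    abel
  · exact (intervalIntegral.continuous_primitive hF_int' 0).sub (by fun_prop)

-- The filter is `cobounded` rather than `atTop` so that flows of negative speed are covered.
lemma tendsto_inv_smul_primitive_cobounded {F : ℝ → E} {T : ℝ} (hF : F.Periodic T) (hT : T ≠ 0)
    (hF_int : IntervalIntegrable F volume 0 T) :
    Tendsto (fun t : ℝ => t⁻¹ • ∫ s in (0 : ℝ)..t, F s) (Bornology.cobounded ℝ)
      (𝓝 (T⁻¹ • ∫ s in (0 : ℝ)..T, F s)) := by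
  obtain ⟨C, hC⟩ := (isBounded_range_primitive_sub_mean hF hT hF_int).exists_norm_le
  have hlim := (tendsto_inv₀_cobounded (α := ℝ)).zero_smul_isBoundedUnder_le
    (isBoundedUnder_of ⟨C, fun t => hC _ (Set.mem_range_self t)⟩)
  refine tendsto_sub_nhds_zero_iff.1 (hlim.congr' ?_)
  filter_upwards [Bornology.eventually_ne_cobounded 0] with t ht
  rw [smul_sub, inv_smul_smul₀ ht]

lemma tendsto_time_average_addCircle {T : ℝ} [hT : Fact (0 < T)] {F : AddCircle T → E}
    (hF : Integrable F haarAddCircle) {c : ℝ} (hc : c ≠ 0) :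
    Tendsto (fun R : ℝ => R⁻¹ • ∫ t in (0 : ℝ)..R, F ↑(c * t)) atTop
      (𝓝 (∫ x, F x ∂haarAddCircle)) := by
  have hper : Function.Periodic (fun s : ℝ => F s) T := fun s => by simp
  have hF_int := intervalIntegrable_coe_addCircle hF 0 T
  have hmean : T⁻¹ • ∫ s in (0 : ℝ)..T, F s = ∫ x, F x ∂haarAddCircle := by
    rw [integral_haarAddCircle, ← AddCircle.intervalIntegral_preimage T 0 F, zero_add]
  rw [← hmean]
  have hlim := (tendsto_inv_smul_primitive_cobounded hper hT.out.ne' hF_int).comp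
    ((tendsto_mul_left_cobounded hc).comp IsOrderBornology.atTop_le_cobounded)
  refine hlim.congr fun R => ?_
  have hscale := intervalIntegral.integral_comp_mul_left (a := 0) (b := R) (fun s : ℝ => F s) hc
  simp only [Function.comp_def]
  rw [hscale, mul_zero, smul_smul, mul_inv_rev]

end TimeAverage

section FourierCoeff

variable {T : ℝ}

lemma fourier_apply_add (n : ℤ) (x y : AddCircle T) :
    fourier n (x + y) = fourier n x * fourier n y := by
  simp [toCircle_add]

lemma fourier_apply_neg (n : ℤ) (x : AddCircle T) : fourier n (-x) = conj (fourier n x) := by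
  rw [← fourier_neg, fourier_apply, fourier_apply, smul_neg, neg_smul]

lemma fourier_apply_zsmul (n p : ℤ) (x : AddCircle T) : fourier n (p • x) = fourier (p * n) x := by
  rw [fourier_apply, fourier_apply, smul_smul, mul_comm]

lemma re_fourier_coe (n : ℤ) (u : ℝ) :
    (fourier n (u : UnitAddCircle)).re = Real.cos (2 * π * n * u) := by
  rw [fourier_coe_apply, ← Complex.exp_ofReal_mul_I_re]
  push_cast
  ring_nf

lemma fourier_coe_half (n : ℤ) : fourier n ((1 / 2 : ℝ) : UnitAddCircle) = (-1) ^ n := by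
  rw [fourier_coe_apply, ← Complex.exp_pi_mul_I, ← Complex.exp_int_mul]
  push_cast
  ring_nf

variable [hT : Fact (0 < T)]

lemma fourier_eq_one_iff {n : ℤ} {x : AddCircle T} : fourier n x = 1 ↔ n • x = 0 := by
  rw [fourier_apply, Circle.coe_eq_one, ← toCircle_zero, (injective_toCircle hT.out.ne').eq_iff]

lemma hasSum_conj_fourierCoeff_mul {f g : AddCircle T → ℂ} (hf : MemLp f 2 haarAddCircle)
    (hg : MemLp g 2 haarAddCircle) :
    HasSum (fun n => conj (fourierCoeff f n) * fourierCoeff g n)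
      (∫ x, conj (f x) * g x ∂haarAddCircle) := by
  have hsum := (fourierBasis (T := T)).hasSum_inner_mul_inner (hf.toLp f) (hg.toLp g)
  convert! hsum using 1
  · ext n
    rw [← inner_conj_symm, ← HilbertBasis.repr_apply_apply, ← HilbertBasis.repr_apply_apply,
      fourierBasis_repr, fourierBasis_repr, fourierCoeff_congr_ae hf.coeFn_toLp,
      fourierCoeff_congr_ae hg.coeFn_toLp]
  · rw [L2.inner_def]
    refine integral_congr_ae ?_
    filter_upwards [hf.coeFn_toLp, hg.coeFn_toLp] with x hfx hgx
    rw [hfx, hgx, RCLike.inner_apply']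

variable {E : Type*} [NormedAddCommGroup E] [NormedSpace ℂ E]

lemma fourierCoeff_ofReal_neg (f : AddCircle T → ℝ) (n : ℤ) :
    fourierCoeff (fun x => (f x : ℂ)) (-n) = conj (fourierCoeff (fun x => (f x : ℂ)) n) := by
  simp only [fourierCoeff, smul_eq_mul]
  rw [← integral_conj]
  simp only [map_mul, Complex.conj_ofReal, fourier_neg, Complex.conj_conj, neg_neg]

lemma fourierCoeff_comp_add_right (f : AddCircle T → E) (a : AddCircle T) (n : ℤ) :
    fourierCoeff (fun x => f (x + a)) n = fourier n a • fourierCoeff f n := by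
  have hchar (x : AddCircle T) : fourier (-n) x = fourier n a * fourier (-n) (x + a) := by
    rw [fourier_apply_add, mul_left_comm, ← fourier_add, add_neg_cancel, fourier_zero, mul_one]
  simp only [fourierCoeff]
  rw [← integral_add_right_eq_self (fun y => fourier (-n) y • f y) a, ← integral_smul]
  exact integral_congr_ae (.of_forall fun x => by simp only [hchar x, mul_smul])

lemma fourierCoeff_eq_zero_of_comp_add_right {f : AddCircle T → E} {a : AddCircle T}
    (hf : ∀ x, f (x + a) = f x) {n : ℤ} (hn : n • a ≠ 0) : fourierCoeff f n = 0 := by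
  have h := fourierCoeff_comp_add_right f a n
  simp only [hf] at h
  refine (smul_eq_zero.1 ?_).resolve_left (sub_ne_zero.2 (mt fourier_eq_one_iff.1 hn))
  rw [sub_smul, one_smul, ← h, sub_self]

lemma fourierCoeff_comp_zsmul_mul {f : AddCircle T → E}
    (hf : AEStronglyMeasurable f haarAddCircle) {p : ℤ} (hp : p ≠ 0) (m : ℤ) :
    fourierCoeff (fun x => f (p • x)) (p * m) = fourierCoeff f m := by
  have hmp := Measure.measurePreserving_zsmul (haarAddCircle (T := T)) hp
  have hmeas : AEStronglyMeasurable (fun y => fourier (-m) y • f y) haarAddCircle :=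
    (map_continuous _).aestronglyMeasurable.smul hf
  simp only [fourierCoeff]
  nth_rw 2 [← hmp.map_eq]
  rw [integral_map hmp.aemeasurable (hmp.map_eq.symm ▸ hmeas)]
  simp only [fourier_apply_zsmul, mul_neg]

lemma fourierCoeff_comp_zsmul_of_not_dvd (f : AddCircle T → E) {p n : ℤ} (hp : p ≠ 0)
    (hpn : ¬ p ∣ n) : fourierCoeff (fun x => f (p • x)) n = 0 := by
  have hp' : (p : ℝ) ≠ 0 := Int.cast_ne_zero.2 hp
  -- `x ↦ f (p • x)` is invariant under translation by `T / p`, whereas `fourier n` is not.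
  refine fourierCoeff_eq_zero_of_comp_add_right (a := ((T / p : ℝ) : AddCircle T)) (fun x => ?_) ?_
  · have hpT : p • ((T / p : ℝ) : AddCircle T) = 0 := by
      rw [← coe_zsmul, zsmul_eq_mul, mul_div_cancel₀ _ hp', coe_period]
    rw [smul_add, hpT, add_zero]
  · rw [← coe_zsmul, Ne, coe_eq_zero_iff]
    rintro ⟨k, hk⟩
    refine hpn ⟨k, ?_⟩
    rw [zsmul_eq_mul, zsmul_eq_mul, mul_div_assoc', eq_div_iff hp'] at hk
    have hk' : (k * p : ℝ) = n := mul_right_cancel₀ hT.out.ne' (by linear_combination hk)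
    rw [mul_comm]
    exact_mod_cast hk'.symm

lemma fourierCoeff_comp_zsmul_sub_mul {f : AddCircle T → E}
    (hf : AEStronglyMeasurable f haarAddCircle) {p : ℤ} (hp : p ≠ 0) (a : AddCircle T) (m : ℤ) :
    fourierCoeff (fun x => f (p • x - a)) (p * m) = fourier m (-a) • fourierCoeff f m := by
  have hf' : AEStronglyMeasurable (fun x => f (x + -a)) haarAddCircle :=
    hf.comp_measurePreserving (measurePreserving_add_right _ _)
  simp only [sub_eq_add_neg]
  rw [fourierCoeff_comp_zsmul_mul hf' hp, fourierCoeff_comp_add_right]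

lemma measurePreserving_zsmul_sub {p : ℤ} (hp : p ≠ 0) (a : AddCircle T) :
    MeasurePreserving (fun x : AddCircle T => p • x - a) haarAddCircle haarAddCircle :=
  (measurePreserving_sub_right haarAddCircle a).comp
    (Measure.measurePreserving_zsmul haarAddCircle hp)

lemma hasSum_integral_conj_comp_zsmul_sub_mul {f g : AddCircle T → ℂ}
    (hf : MemLp f 2 haarAddCircle) (hg : MemLp g 2 haarAddCircle) {p q : ℤ} (hp : p ≠ 0)
    (hq : q ≠ 0) (hpq : IsCoprime p q) (a b : AddCircle T) :
    HasSum (fun l => fourier l (q • a - p • b) *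
        (conj (fourierCoeff f (q * l)) * fourierCoeff g (p * l)))
      (∫ x, conj (f (p • x - a)) * g (q • x - b) ∂haarAddCircle) := by
  have hsum := hasSum_conj_fourierCoeff_mul
    (hf.comp_measurePreserving (measurePreserving_zsmul_sub hp a))
    (hg.comp_measurePreserving (measurePreserving_zsmul_sub hq b))
  have hinj : Function.Injective (fun l => p * (q * l)) :=
    (mul_right_injective₀ hp).comp (mul_right_injective₀ hq)
  simp only [Function.comp_def] at hsum
  rw [← hinj.hasSum_iff] at hsum
  · refine hsum.congr_fun fun l => ?_
    rw [Function.comp_apply]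
    nth_rw 2 [mul_left_comm p q l]
    rw [fourierCoeff_comp_zsmul_sub_mul hf.1 hp, fourierCoeff_comp_zsmul_sub_mul hg.1 hq,
      smul_eq_mul, smul_eq_mul, map_mul, ← fourier_apply_neg, neg_neg, mul_mul_mul_comm,
      sub_eq_add_neg, fourier_apply_add, ← smul_neg, fourier_apply_zsmul, fourier_apply_zsmul]
  · intro n hn
    by_cases hpn : p ∣ n
    · have hqn : ¬ q ∣ n := fun hqn => by
        obtain ⟨l, rfl⟩ := hpq.mul_dvd hpn hqn
        exact hn ⟨l, (mul_assoc _ _ _).symm⟩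
      rw [fourierCoeff_comp_zsmul_of_not_dvd (fun x => g (x - b)) hq hqn, mul_zero]
    · rw [fourierCoeff_comp_zsmul_of_not_dvd (fun x => f (x - a)) hp hpn, map_zero, zero_mul]

end FourierCoeff

section OddSum

lemma hasSum_nat_odd_of_even {M : Type*} [AddCommGroup M] [TopologicalSpace M]
    [IsTopologicalAddGroup M]
    {f : ℤ → M} {m : M} (hf : HasSum f m) (hneg : ∀ n, f (-n) = f n)
    (heven : ∀ n, Even n → f n = 0) : HasSum (fun k : ℕ => 2 • f (2 * k + 1)) m := by
  have hinj : Function.Injective (fun k : ℤ => 2 * k + 1) := fun k k' h => by simpa using h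
  rw [← hinj.hasSum_iff fun n hn => heven n (Int.not_odd_iff_even.1 fun ⟨k, hk⟩ => hn ⟨k, hk.symm⟩)]
    at hf
  refine hf.nat_add_neg_add_one.congr_fun fun k => ?_
  have hsymm : f (2 * -((k : ℤ) + 1) + 1) = f (2 * k + 1) := by
    rw [← hneg]
    ring_nf
  rw [two_nsmul, Function.comp_apply, Function.comp_apply, hsymm]

lemma sin_mul_sin_pi_mul_div_two {m n N : ℤ} (hn : Odd n) (hmn : m + n = 2 * N) :
    Real.sin (π * m / 2) * Real.sin (π * n / 2) = (-1) ^ (N + 1) := by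
  have hm : π * m / 2 = N * π - π * n / 2 := by
    have : (m + n : ℝ) = 2 * N := by exact_mod_cast hmn
    linear_combination π / 2 * this
  have hsq : Real.sin (π * n / 2) ^ 2 = 1 := by
    rw [Real.sin_sq_eq_half_sub, mul_div_cancel₀ _ two_ne_zero, mul_comm, Real.cos_int_mul_pi,
      hn.neg_one_zpow]
    norm_num
  rw [hm, Real.sin_int_mul_pi_sub, zpow_add_one₀ (by norm_num)]
  linear_combination -(-1) ^ N * hsq

end OddSum

section SquareWave

lemma sgn_eq_sign (t : ℝ) : sgn t = SignType.sign t := by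
  rw [sgn, sign_apply]
  split_ifs <;> simp

lemma sgn_mul (a b : ℝ) : sgn (a * b) = sgn a * sgn b := by simp [sgn_eq_sign, sign_mul]

lemma sgn_neg (a : ℝ) : sgn (-a) = -sgn a := by simp [sgn_eq_sign, Left.sign_neg]

lemma sgn_of_pos {a : ℝ} (ha : 0 < a) : sgn a = 1 := if_pos ha

lemma abs_sgn_le_one (a : ℝ) : |sgn a| ≤ 1 := by
  unfold sgn
  split_ifs <;> simp

lemma measurable_sgn : Measurable sgn :=
  Measurable.ite measurableSet_Ioi measurable_const
    (Measurable.ite measurableSet_Iio measurable_const measurable_const)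

/-- The square wave of period one, `u ↦ sgn (cos (2πu))`, as a function on the circle `ℝ / ℤ`. -/
noncomputable def squareWave (x : UnitAddCircle) : ℝ := sgn (fourier 1 x).re

lemma squareWave_coe (u : ℝ) : squareWave u = sgn (Real.cos (2 * π * u)) := by
  rw [squareWave, re_fourier_coe, Int.cast_one, mul_one]

lemma Φ_mul_sub_mul_sub (p q : ℤ) (s α β : ℝ) :
    Φ (p * s - α) (q * s - β) =
      squareWave (p • (s : UnitAddCircle) - α) * squareWave (q • (s : UnitAddCircle) - β) := by
  simp only [Φ, sgn_mul, ← squareWave_coe, ← coe_zsmul, ← coe_sub, zsmul_eq_mul]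

lemma squareWave_add_half (x : UnitAddCircle) :
    squareWave (x + ((1 / 2 : ℝ) : UnitAddCircle)) = -squareWave x := by
  have h := fourier_add_half_inv_index one_ne_zero one_pos x
  rw [Int.cast_one, div_one] at h
  rw [squareWave, h, Complex.neg_re, sgn_neg, squareWave]

lemma squareWave_coe_of_mem_Ioo {u : ℝ} (hu : u ∈ Set.Ioo (-(1 / 4) : ℝ) (1 / 4)) :
    squareWave u = 1 := by
  rw [squareWave_coe]
  exact sgn_of_pos (Real.cos_pos_of_mem_Ioo
    ⟨by nlinarith [hu.1, pi_pos], by nlinarith [hu.2, pi_pos]⟩)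

lemma memLp_squareWave (r : ENNReal) : MemLp squareWave r haarAddCircle :=
  .of_bound (measurable_sgn.comp (by fun_prop)).aestronglyMeasurable 1
    (ae_of_all _ fun _ => abs_sgn_le_one _)

lemma integrable_squareWave_mul {p q : ℤ} (hp : p ≠ 0) (hq : q ≠ 0) (a b : UnitAddCircle) :
    Integrable (fun x => squareWave (p • x - a) * squareWave (q • x - b)) haarAddCircle :=
  ((memLp_squareWave 2).comp_measurePreserving (measurePreserving_zsmul_sub hp a)).integrable_mul
    ((memLp_squareWave 2).comp_measurePreserving (measurePreserving_zsmul_sub hq b))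

lemma fourierCoeff_squareWave_of_even {n : ℤ} (hn : Even n) :
    fourierCoeff (fun x => (squareWave x : ℂ)) n = 0 := by
  have hneg (x : UnitAddCircle) : (squareWave (x + ((1 / 2 : ℝ) : UnitAddCircle)) : ℂ) =
      -1 * squareWave x := by
    rw [squareWave_add_half, Complex.ofReal_neg, neg_one_mul]
  have h := fourierCoeff_comp_add_right (fun x => (squareWave x : ℂ))
    ((1 / 2 : ℝ) : UnitAddCircle) n
  simp only [hneg, fourierCoeff.const_mul, fourier_coe_half, hn.neg_one_zpow, one_smul] at h
  linear_combination -1 / 2 * h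

lemma integral_fourier_neg_quarter {n : ℤ} (hn : n ≠ 0) :
    ∫ s in (-(1 / 4) : ℝ)..(1 / 4), fourier (-n) (s : UnitAddCircle) =
      ((Real.sin (π * n / 2) / (π * n) : ℝ) : ℂ) := by
  have hpi : (π : ℂ) ≠ 0 := Complex.ofReal_ne_zero.2 pi_ne_zero
  have hn' : (n : ℂ) ≠ 0 := Int.cast_ne_zero.2 hn
  have hexp (s : ℝ) : fourier (-n) (s : UnitAddCircle) =
      Complex.exp (-(2 * π * Complex.I * n) * s) := by
    rw [fourier_coe_apply]
    push_cast
    ring_nf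
  have hc : -(2 * π * Complex.I * n) ≠ 0 := by simp [hpi, hn']
  simp_rw [hexp]
  rw [integral_exp_mul_complex hc]
  push_cast
  rw [Complex.sin, show -(2 * π * Complex.I * n) * (1 / 4 : ℂ) = -(π * n / 2) * Complex.I by ring,
    show -(2 * π * Complex.I * n) * (-(1 / 4) : ℂ) = (π * n / 2) * Complex.I by ring]
  field_simp
  rw [Complex.I_sq]
  ring

lemma fourierCoeff_squareWave_of_odd {n : ℤ} (hn : Odd n) :
    fourierCoeff (fun x => (squareWave x : ℂ)) n =
      ((2 * Real.sin (π * n / 2) / (π * n) : ℝ) : ℂ) := by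
  have hn0 : n ≠ 0 := by rintro rfl; simp at hn
  -- The integrand has period `1 / 2`, so its integral over the circle is twice that over
  -- `(-1 / 4, 1 / 4)`, where the wave is `1`.
  have hint : Integrable (fun x => fourier (-n) x * (squareWave x : ℂ)) haarAddCircle :=
    ((memLp_squareWave 1).integrable le_rfl).ofReal.fourier_smul (-n)
  have hper : Function.Periodic
      (fun s : ℝ => fourier (-n) (s : UnitAddCircle) * (squareWave s : ℂ)) (1 / 2) := fun s => by
    simp only [coe_add, fourier_apply_add, squareWave_add_half, fourier_coe_half,
      hn.neg.neg_one_zpow, Complex.ofReal_neg, mul_neg_one, neg_mul_neg]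
  have hquarter : ∫ s in (-(1 / 4) : ℝ)..(1 / 4),
      fourier (-n) (s : UnitAddCircle) * (squareWave s : ℂ) =
        ((Real.sin (π * n / 2) / (π * n) : ℝ) : ℂ) := by
    rw [← integral_fourier_neg_quarter hn0]
    refine intervalIntegral.integral_congr_Ioo_of_le (by norm_num) fun s hs => ?_
    simp only [squareWave_coe_of_mem_Ioo hs, Complex.ofReal_one, mul_one]
  have htwo := hper.intervalIntegral_add_zsmul_eq 2 (-(1 / 4))
    (intervalIntegrable_coe_addCircle hint)
  rw [show (-(1 / 4) + (2 : ℤ) • (1 / 2) : ℝ) = -(1 / 4) + 1 by norm_num,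
    show (-(1 / 4) + 1 / 2 : ℝ) = 1 / 4 by norm_num, hquarter] at htwo
  rw [fourierCoeff_eq_intervalIntegral _ _ (-(1 / 4))]
  simp only [smul_eq_mul, div_one, one_smul]
  rw [htwo]
  push_cast
  ring

lemma conj_fourierCoeff_squareWave_mul {p q l : ℤ} (hp : Odd p) (hq : Odd q) (hl : Odd l) :
    conj (fourierCoeff (fun x => (squareWave x : ℂ)) (q * l)) *
        fourierCoeff (fun x => (squareWave x : ℂ)) (p * l) =
      ((-1) ^ ((p + q) / 2 + 1) * (4 / (π ^ 2 * p * q)) / l ^ 2 : ℝ) := by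
  obtain ⟨N, hN⟩ := hp.add_odd hq
  have hN' : (p + q) / 2 = N := by omega
  have hsin := sin_mul_sin_pi_mul_div_two (m := q * l) (hp.mul hl) (N := N * l)
    (by linear_combination l * hN)
  have hsign : (-1 : ℝ) ^ (N * l + 1) = (-1) ^ (N + 1) := by
    rw [zpow_add_one₀ (by norm_num), zpow_add_one₀ (by norm_num), mul_comm N, zpow_mul,
      hl.neg_one_zpow]
  rw [fourierCoeff_squareWave_of_odd (hq.mul hl), fourierCoeff_squareWave_of_odd (hp.mul hl),
    Complex.conj_ofReal, ← Complex.ofReal_mul, hN', ← hsign, ← hsin]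
  congr 1
  push_cast
  field_simp
  ring

lemma hasSum_integral_squareWave_mul {p q : ℤ} (hp : Odd p) (hq : Odd q) (hpq : IsCoprime p q)
    (α β : ℝ) :
    HasSum (fun k : ℕ => (-1 : ℝ) ^ ((p + q) / 2 + 1) * (8 / (π ^ 2 * p * q)) *
        (Real.cos (2 * π * (2 * k + 1) * (p * β - q * α)) / (2 * k + 1) ^ 2))
      (∫ x : UnitAddCircle, squareWave (p • x - (α : UnitAddCircle)) *
        squareWave (q • x - (β : UnitAddCircle)) ∂haarAddCircle) := by
  have hp0 : p ≠ 0 := by rintro rfl; simp at hp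
  have hq0 : q ≠ 0 := by rintro rfl; simp at hq
  have hL2 : MemLp (fun x => (squareWave x : ℂ)) 2 haarAddCircle := (memLp_squareWave 2).ofReal
  have hsum := hasSum_integral_conj_comp_zsmul_sub_mul hL2 hL2 hp0 hq0 hpq α β
  simp only [Complex.conj_ofReal, ← Complex.ofReal_mul, integral_complex_ofReal] at hsum
  refine (hasSum_nat_odd_of_even (Complex.hasSum_re hsum) ?_ ?_).congr_fun ?_
  · intro l
    simp only [mul_neg, fourierCoeff_ofReal_neg, fourier_neg, ← map_mul, Complex.conj_re]
  · intro l hl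
    rw [fourierCoeff_squareWave_of_even (hl.mul_left p), mul_zero, mul_zero, Complex.zero_re]
  · intro k
    have hcos : (fourier (2 * k + 1) (q • (α : UnitAddCircle) - p • (β : UnitAddCircle))).re =
        Real.cos (2 * π * (2 * k + 1) * (p * β - q * α)) := by
      rw [← coe_zsmul, ← coe_zsmul, ← coe_sub, re_fourier_coe, ← Real.cos_neg]
      push_cast [zsmul_eq_mul]
      ring_nf
    rw [conj_fourierCoeff_squareWave_mul hp hq ⟨k, rfl⟩, Complex.re_mul_ofReal, hcos]
    push_cast
    ring

end SquareWave

theorem time_average_odd_case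
    (A B : ℝ) (hA : A ≠ 0) (hB : B ≠ 0) (α β : ℝ)
    (p q : ℤ) (hcop : IsCoprime p q) (hpq : A * (q : ℝ) = B * (p : ℝ))
    (hp : Odd p) (hq : Odd q) :
    Tendsto (fun T : ℝ => (1 / T) * ∫ t in (0:ℝ)..T, Φ (A * t - α) (B * t - β))
      atTop (nhds ((-1 : ℝ) ^ ((p + q) / 2 + 1) * (8 / (π ^ 2 * (p : ℝ) * (q : ℝ))) *
        ∑' ℓ : ℕ, Real.cos (2 * π * (2 * (ℓ : ℝ) + 1) * ((p : ℝ) * β - (q : ℝ) * α)) /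
          (2 * (ℓ : ℝ) + 1) ^ 2)) := by
  have hp0 : p ≠ 0 := by rintro rfl; simp at hp
  have hq0 : q ≠ 0 := by rintro rfl; simp at hq
  have hp0' : (p : ℝ) ≠ 0 := Int.cast_ne_zero.2 hp0
  have hmean := tendsto_time_average_addCircle
    (integrable_squareWave_mul hp0 hq0 α β) (div_ne_zero hA hp0')
  rw [← (hasSum_integral_squareWave_mul hp hq hcop α β).tsum_eq, tsum_mul_left] at hmean
  have hflow (t : ℝ) : Φ (A * t - α) (B * t - β) =
      squareWave (p • ↑(A / p * t) - α) * squareWave (q • ↑(A / p * t) - β) := by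
    have hAt : A * t = p * (A / p * t) := by field_simp
    have hBt : B * t = q * (A / p * t) := by field_simp; linear_combination -t * hpq
    rw [hAt, hBt, Φ_mul_sub_mul_sub]
  simpa only [hflow, one_div, smul_eq_mul] using hmean
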